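/- Let |q| < 1, let ρ₁₂, ρ₁₃, ρ₂₃ be reals with 0 < |ρ₁₂|, |ρ₁₃|, |ρ₂₃| < 1 for which the triple series g(x₁,x₂,x₃) = Σ_{k,m,n=0}^∞ (ρ₁₂^k·ρ₁₃^m·ρ₂₃^n/([k]_q!·[m]_q!·[n]_q!))·H_{k+m}(x₁|q)·H_{k+n}(x₂|q)·H_{m+n}(x₃|q) converges absolutely for x₁, x₂, x₃ ∈ S(q). Then g(x₁,x₂,x₃) = ((ρ₁₃²;q)_∞·(ρ₂₃²;q)_∞/∏_{k=0}^∞ (W_k(x₁,x₃,ρ₁₃|q)·W_k(x₃,x₂,ρ₂₃|q))) · Σ_{s=0}^∞ (ρ₁₂^s·(ρ₁₃ρ₂₃/ρ₁₂;q)_s/([s]_q!·(ρ₁₃²;q)_s·(ρ₂₃²;q)_s))·P_s(x₁|x₃,ρ₁₃,q)·P_s(x₂|x₃,ρ₂₃,q). -/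

import Mathlib

noncomputable section

open Finset

/-- The q-integer `[n]_q = 1 + q + ⋯ + q^{n-1}`. -/
def qInt (q : ℝ) (n : ℕ) : ℝ := ∑ i ∈ Finset.range n, q ^ i

/-- The q-factorial `[n]_q!`. -/
def qFact (q : ℝ) (n : ℕ) : ℝ := ∏ j ∈ Finset.range n, qInt q (j + 1)

/-- The q-binomial coefficient. -/
def qBinom (q : ℝ) (n k : ℕ) : ℝ :=
  if k ≤ n then qFact q n / (qFact q (n - k) * qFact q k) else 0

/-- The finite q-Pochhammer symbol `(a;q)_n`. -/
def qPoch (a q : ℝ) (n : ℕ) : ℝ := ∏ j ∈ Finset.range n, (1 - a * q ^ j)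

/-- The infinite q-Pochhammer symbol `(a;q)_∞`. -/
def qPochInf (a q : ℝ) : ℝ := ∏' j : ℕ, (1 - a * q ^ j)

/-- The q-Hermite polynomials `H_n(x|q)`. -/
def qHermite (q : ℝ) : ℕ → ℝ → ℝ
  | 0, _ => 1
  | 1, x => x
  | n + 2, x => x * qHermite q (n + 1) x - qInt q (n + 1) * qHermite q n x

/-- The rescaled q-ultraspherical polynomials `R_n(x|β,q)`. -/
def qUltra (q β : ℝ) : ℕ → ℝ → ℝ
  | 0, _ => 1
  | 1, x => (1 - β) * x
  | n + 2, x => (1 - β * q ^ (n + 1)) * x * qUltra q β (n + 1) x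
      - (1 - β ^ 2 * q ^ n) * qInt q (n + 1) * qUltra q β n x

/-- The Al-Salam–Chihara polynomials `P_n(x|y,ρ,q)`. -/
def ASC (q y ρ : ℝ) : ℕ → ℝ → ℝ
  | 0, _ => 1
  | 1, x => x - ρ * y
  | n + 2, x => (x - ρ * y * q ^ (n + 1)) * ASC q y ρ (n + 1) x
      - (1 - ρ ^ 2 * q ^ n) * qInt q (n + 1) * ASC q y ρ n x

/-- The polynomials `B_n(y|q)` (q⁻¹-Hermite related). -/
def qB (q : ℝ) : ℕ → ℝ → ℝ
  | 0, _ => 1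
  | 1, y => -y
  | n + 2, y => -q ^ (n + 1) * y * qB q (n + 1) y + q ^ n * qInt q (n + 1) * qB q n y

/-- The big q-Hermite polynomials `H_n(x|a,q)`. -/
def bigqHermite (q a : ℝ) : ℕ → ℝ → ℝ
  | 0, _ => 1
  | 1, x => x - a
  | n + 2, x => (x - a * q ^ (n + 1)) * bigqHermite q a (n + 1) x
      - qInt q (n + 1) * bigqHermite q a n x

/-- The probabilistic Hermite polynomials `H_n(x)`. -/
def probHermite : ℕ → ℝ → ℝ
  | 0, _ => 1
  | 1, x => x
  | n + 2, x => x * probHermite (n + 1) x - (n + 1) * probHermite n x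

/-- The probabilistic Hermite polynomials on ℂ. -/
def probHermiteC : ℕ → ℂ → ℂ
  | 0, _ => 1
  | 1, x => x
  | n + 2, x => x * probHermiteC (n + 1) x - (n + 1) * probHermiteC n x

/-- The Chebyshev polynomials of the second kind. -/
def chebU : ℕ → ℝ → ℝ
  | 0, _ => 1
  | 1, x => 2 * x
  | n + 2, x => 2 * x * chebU (n + 1) x - chebU n x

/-- The Chebyshev polynomials of the first kind. -/
def chebT : ℕ → ℝ → ℝ
  | 0, _ => 1
  | 1, x => x
  | n + 2, x => 2 * x * chebT (n + 1) x - chebT n x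

/-- `W_k(x,y,t|q)`. -/
def Wk (q x y t : ℝ) (k : ℕ) : ℝ :=
  (1 - t ^ 2 * q ^ (2 * k)) ^ 2 - (1 - q) * x * y * t * q ^ k * (1 + t ^ 2 * q ^ (2 * k))
    + (1 - q) * t ^ 2 * q ^ (2 * k) * (x ^ 2 + y ^ 2)

/-- `V_k(x,a|q)`. -/
def Vk (q x a : ℝ) (k : ℕ) : ℝ :=
  1 - (1 - q) * a * x * q ^ k + (1 - q) * a ^ 2 * q ^ (2 * k)

/-- `L_k(x,a|q)`. -/
def Lk (q x a : ℝ) (k : ℕ) : ℝ :=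
  (1 + a * q ^ k) ^ 2 - (1 - q) * x ^ 2 * a ^ 2 * q ^ k

/-- The support interval `S(q) = [-2/√(1-q), 2/√(1-q)]` for `|q| < 1`. -/
def Sq (q : ℝ) : Set ℝ := Set.Icc (-(2 / Real.sqrt (1 - q))) (2 / Real.sqrt (1 - q))

/-- The general term of the triple (Kibble–Slepian type) series. -/
def tripleTerm (q ρ₁₂ ρ₁₃ ρ₂₃ x₁ x₂ x₃ : ℝ) (p : ℕ × ℕ × ℕ) : ℝ :=
  ρ₁₂ ^ p.1 * ρ₁₃ ^ p.2.1 * ρ₂₃ ^ p.2.2 /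
      (qFact q p.1 * qFact q p.2.1 * qFact q p.2.2) *
    qHermite q (p.1 + p.2.1) x₁ * qHermite q (p.1 + p.2.2) x₂ *
    qHermite q (p.2.1 + p.2.2) x₃

/-!
The factor `H_{m+n}(x₃|q)` is expanded by the inverse linearization formula into products
`H_{m-j}(x₃|q) H_{n-j}(x₃|q)`. The sums over `m` and `n` then decouple into shifted Poisson–Mehler
kernels `∑_m t^m H_{m+s}(x|q) H_m(y|q) / [m]_q!` with `s = k + j`. As a function of `s` such a
kernel satisfies the Al-Salam–Chihara recurrence up to the factor `(t²;q)_s`, and the kernel with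
`s = 0` is found by iterating a q-difference equation in `t`. The remaining sum over `k + j = s` is
Gauss's q-binomial theorem. The rearrangements are justified by `H_n(x|q) = O((K / √(1-q))^n)` on
`S(q)` for every `K > 1`, which makes the fourfold series absolutely convergent.
-/

open Filter Topology Asymptotics ComplexConjugate

section QNumbers

variable {q a : ℝ}

lemma qInt_zero (q : ℝ) : qInt q 0 = 0 := by simp [qInt]

lemma qInt_one (q : ℝ) : qInt q 1 = 1 := by simp [qInt]

lemma one_sub_mul_qInt (q : ℝ) (n : ℕ) : (1 - q) * qInt q n = 1 - q ^ n :=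
  mul_neg_geom_sum q n

lemma qInt_add (q : ℝ) (m n : ℕ) : qInt q (m + n) = qInt q m + q ^ m * qInt q n := by
  simp only [qInt, sum_range_add, pow_add, mul_sum]

lemma qInt_succ_ne_zero (hq : q ≠ -1) (n : ℕ) : qInt q (n + 1) ≠ 0 :=
  geom_sum_ne_zero hq n.succ_ne_zero

lemma qFact_zero (q : ℝ) : qFact q 0 = 1 := prod_range_zero _

lemma qFact_succ (q : ℝ) (n : ℕ) : qFact q (n + 1) = qFact q n * qInt q (n + 1) :=
  prod_range_succ _ n

lemma qFact_ne_zero (hq : q ≠ -1) (n : ℕ) : qFact q n ≠ 0 :=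
  prod_ne_zero_iff.mpr fun j _ => qInt_succ_ne_zero hq j

lemma ne_neg_one_of_abs_lt_one (hq : |q| < 1) : q ≠ -1 := (abs_lt.mp hq).1.ne'

lemma qPoch_zero (a q : ℝ) : qPoch a q 0 = 1 := prod_range_zero _

lemma qPoch_succ (a q : ℝ) (n : ℕ) : qPoch a q (n + 1) = qPoch a q n * (1 - a * q ^ n) :=
  prod_range_succ _ n

lemma qPoch_self (q : ℝ) (n : ℕ) : qPoch q q n = (1 - q) ^ n * qFact q n := by
  rw [qPoch, qFact, ← card_range n, ← prod_const, card_range, ← prod_mul_distrib]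
  exact prod_congr rfl fun j _ => by rw [one_sub_mul_qInt, pow_succ']

lemma pow_mul_qPoch_div (ha : a ≠ 0) (b q : ℝ) (n : ℕ) :
    a ^ n * qPoch (b / a) q n = ∏ i ∈ range n, (a - b * q ^ i) := by
  rw [qPoch, ← card_range n, ← prod_const, card_range, ← prod_mul_distrib]
  exact prod_congr rfl fun i _ => by field_simp

lemma one_sub_mul_pow_ne_zero (ha : |a| < 1) (hq : |q| ≤ 1) (n : ℕ) : 1 - a * q ^ n ≠ 0 := by
  have h : |a * q ^ n| < 1 := by
    rw [abs_mul, abs_pow]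
    exact mul_lt_one_of_nonneg_of_lt_one_left (abs_nonneg a) ha (pow_le_one₀ (abs_nonneg q) hq)
  exact sub_ne_zero.mpr ((le_abs_self _).trans_lt h).ne'

lemma qPoch_ne_zero (ha : |a| < 1) (hq : |q| ≤ 1) (n : ℕ) : qPoch a q n ≠ 0 :=
  prod_ne_zero_iff.mpr fun j _ => one_sub_mul_pow_ne_zero ha hq j

lemma summable_norm_pow_mul_comp_pow (hq : |q| < 1) {g : ℝ → ℝ} (hg : ContinuousAt g 0) :
    Summable fun k : ℕ => ‖q ^ k * g (q ^ k)‖ := by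
  have hbdd : (fun k : ℕ => g (q ^ k)) =O[atTop] (1 : ℕ → ℝ) :=
    (hg.tendsto.comp (tendsto_pow_atTop_nhds_zero_of_abs_lt_one hq)).isBigO_one ℝ
  refine summable_of_isBigO_nat (summable_geometric_of_lt_one (abs_nonneg q) hq) ?_
  simpa using (((isBigO_refl (fun k : ℕ => q ^ k) atTop).norm_right).mul hbdd).norm_left

lemma multipliable_one_sub_mul_pow (hq : |q| < 1) (a : ℝ) :
    Multipliable fun k : ℕ => 1 - a * q ^ k := by
  simpa [sub_eq_add_neg, mul_comm] using multipliable_one_add_of_summable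
    (summable_norm_pow_mul_comp_pow hq (g := fun _ => -a) continuousAt_const)

lemma qPochInf_ne_zero (ha : |a| < 1) (hq : |q| < 1) : qPochInf a q ≠ 0 := by
  have h := tprod_one_add_ne_zero_of_summable (f := fun k : ℕ => q ^ k * -a)
    (fun k => by simpa [sub_eq_add_neg, mul_comm] using one_sub_mul_pow_ne_zero ha hq.le k)
    (summable_norm_pow_mul_comp_pow hq (g := fun _ => -a) continuousAt_const)
  simpa [qPochInf, sub_eq_add_neg, mul_comm] using h

lemma tendsto_qPoch_qPochInf (hq : |q| < 1) (a : ℝ) :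
    Tendsto (qPoch a q) atTop (𝓝 (qPochInf a q)) :=
  (multipliable_one_sub_mul_pow hq a).tendsto_prod_tprod_nat

lemma Wk_comm (q x y t : ℝ) (k : ℕ) : Wk q x y t k = Wk q y x t k := by
  simp only [Wk]
  ring

lemma Wk_eq_Wk_zero (q x y t : ℝ) (k : ℕ) : Wk q x y t k = Wk q x y (q ^ k * t) 0 := by
  simp only [Wk, pow_mul']
  ring

lemma multipliable_Wk (hq : |q| < 1) (x y t : ℝ) : Multipliable (Wk q x y t) := by
  let g : ℝ → ℝ := fun p => p * (-2 * t ^ 2 + t ^ 4 * p ^ 2)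
    - (1 - q) * x * y * t * (1 + t ^ 2 * p ^ 2) + (1 - q) * t ^ 2 * p * (x ^ 2 + y ^ 2)
  have hg : ContinuousAt g 0 := by fun_prop
  refine (multipliable_one_add_of_summable (summable_norm_pow_mul_comp_pow hq hg)).congr
    fun k => ?_
  simp only [g, Wk, pow_mul']
  ring

/-- The coefficient `(-1)^j q^{j(j-1)/2} / [j]_q!` of Euler's expansion of `((1 - q) z; q)_∞` in
powers of `z`. -/
def eulerCoeff (q : ℝ) (j : ℕ) : ℝ := (-1) ^ j * q ^ j.choose 2 / qFact q j

lemma eulerCoeff_zero (q : ℝ) : eulerCoeff q 0 = 1 := by simp [eulerCoeff, qFact_zero]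

lemma eulerCoeff_succ_mul_qInt (hq : q ≠ -1) (j : ℕ) :
    eulerCoeff q (j + 1) * qInt q (j + 1) = -(q ^ j * eulerCoeff q j) := by
  have hint := qInt_succ_ne_zero hq j
  have hfact := qFact_ne_zero hq j
  rw [eulerCoeff, eulerCoeff, qFact_succ, Nat.choose_succ_succ' j 1, Nat.choose_one_right, pow_add,
    pow_succ]
  field_simp
  ring

lemma abs_eulerCoeff_le (hq : |q| ≤ 1) (j : ℕ) : |eulerCoeff q j| ≤ |(qFact q j)⁻¹| := by
  rw [eulerCoeff, div_eq_mul_inv, abs_mul, abs_mul, abs_neg_one_pow, one_mul, abs_pow]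
  exact mul_le_of_le_one_left (abs_nonneg _) (pow_le_one₀ (abs_nonneg q) hq)

/-- Gauss's q-binomial theorem. -/
lemma qFact_mul_sum_antidiagonal_eulerCoeff (hq : q ≠ -1) (a b : ℝ) (n : ℕ) :
    qFact q n * ∑ p ∈ antidiagonal n, a ^ p.1 / qFact q p.1 * (eulerCoeff q p.2 * b ^ p.2)
      = ∏ i ∈ range n, (a - b * q ^ i) := by
  induction n with
  | zero => simp [qFact_zero, eulerCoeff_zero]
  | succ n ih =>
    set f : ℕ × ℕ → ℝ := fun p => a ^ p.1 / qFact q p.1 * (eulerCoeff q p.2 * b ^ p.2) with hf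
    have hfst (p : ℕ × ℕ) : qInt q (p.1 + 1) * f (p.1 + 1, p.2) = a * f p := by
      have hint := qInt_succ_ne_zero hq p.1
      have hfact := qFact_ne_zero hq p.1
      simp only [hf, qFact_succ]
      field_simp
      ring
    have hsnd (p : ℕ × ℕ) :
        q ^ p.1 * (qInt q (p.2 + 1) * f (p.1, p.2 + 1)) = -(b * q ^ (p.1 + p.2) * f p) := by
      simp only [hf, pow_add]
      linear_combination q ^ p.1 * a ^ p.1 / qFact q p.1 * b ^ (p.2 + 1)
        * eulerCoeff_succ_mul_qInt hq p.2
    have hstep : qInt q (n + 1) * ∑ p ∈ antidiagonal (n + 1), f p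
        = (a - b * q ^ n) * ∑ p ∈ antidiagonal n, f p := calc
      _ = ∑ p ∈ antidiagonal (n + 1), qInt q p.1 * f p
            + ∑ p ∈ antidiagonal (n + 1), q ^ p.1 * (qInt q p.2 * f p) := by
          rw [mul_sum, ← sum_add_distrib]
          refine sum_congr rfl fun p hp => ?_
          rw [← mem_antidiagonal.mp hp, qInt_add]
          ring
      _ = ∑ p ∈ antidiagonal n, a * f p + ∑ p ∈ antidiagonal n, -(b * q ^ n * f p) := by
          rw [Nat.sum_antidiagonal_succ, Nat.sum_antidiagonal_succ']
          simp only [qInt_zero, zero_mul, mul_zero, zero_add, hfst, hsnd]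
          congr 1
          exact sum_congr rfl fun p hp => by rw [mem_antidiagonal.mp hp]
      _ = _ := by
          rw [sum_neg_distrib, ← mul_sum, ← mul_sum]
          ring
    rw [qFact_succ, mul_assoc, hstep, prod_range_succ, ← ih]
    ring

end QNumbers

section Delinearization

variable {q : ℝ}

/-- The three-term recurrence from `n = 0` on: the truncated `n - 1` there is multiplied by
`[0]_q = 0`. -/
lemma qHermite_succ (q x : ℝ) (n : ℕ) :
    qHermite q (n + 1) x = x * qHermite q n x - qInt q n * qHermite q (n - 1) x := by
  cases n <;> simp [qHermite, qInt_zero]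

/-- The q-Hermite polynomial divided by the q-factorial. -/
def normHermite (q x : ℝ) (n : ℕ) : ℝ := qHermite q n x / qFact q n

/-- `H_{m-j}(x|q) / [m-j]_q!`, read as `0` when `m < j`. This convention lets sums over `j` of
products of such terms run over any large enough range. -/
def loweredHermite (q x : ℝ) (m j : ℕ) : ℝ := if j ≤ m then normHermite q x (m - j) else 0

lemma normHermite_zero (q x : ℝ) : normHermite q x 0 = 1 := by
  simp [normHermite, qHermite, qFact_zero]

lemma qFact_mul_normHermite (hq : q ≠ -1) (x : ℝ) (n : ℕ) :
    qFact q n * normHermite q x n = qHermite q n x :=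
  mul_div_cancel₀ _ (qFact_ne_zero hq n)

lemma loweredHermite_of_lt (q x : ℝ) {m j : ℕ} (h : m < j) : loweredHermite q x m j = 0 :=
  if_neg h.not_ge

lemma loweredHermite_zero (q x : ℝ) (m : ℕ) : loweredHermite q x m 0 = normHermite q x m := by
  simp [loweredHermite]

lemma loweredHermite_add_right (q x : ℝ) (m j i : ℕ) :
    loweredHermite q x (m + i) (j + i) = loweredHermite q x m j := by
  simp [loweredHermite, Nat.add_sub_add_right]

lemma loweredHermite_add_self (q x : ℝ) (m j : ℕ) :
    loweredHermite q x (m + j) j = normHermite q x m := by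
  simp [loweredHermite]

lemma qInt_mul_normHermite_succ (hq : q ≠ -1) (x : ℝ) (n : ℕ) :
    qInt q (n + 1) * normHermite q x (n + 1)
      = x * normHermite q x n - loweredHermite q x n 1 := by
  have hint := qInt_succ_ne_zero hq n
  have hfact := qFact_ne_zero hq n
  cases n with
  | zero => simp [normHermite, loweredHermite, qHermite, qFact, qInt_one]
  | succ n =>
    have hint' := qInt_succ_ne_zero hq n
    have hfact' := qFact_ne_zero hq n
    rw [loweredHermite_add_self, normHermite, normHermite, normHermite, qHermite_succ, qFact_succ,
      qFact_succ, add_tsub_cancel_right]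
    field_simp

lemma qInt_mul_loweredHermite_succ (hq : q ≠ -1) (x : ℝ) (m j : ℕ) :
    qInt q (m + 1) * loweredHermite q x (m + 1) j = qInt q j * loweredHermite q x (m + 1) j
      + q ^ j * (x * loweredHermite q x m j - loweredHermite q x m (j + 1)) := by
  rcases lt_trichotomy j (m + 1) with hj | rfl | hj
  · obtain ⟨d, rfl⟩ := Nat.exists_eq_add_of_le' (Nat.lt_succ_iff.mp hj)
    have hrec := qInt_mul_normHermite_succ hq x d
    rw [← loweredHermite_add_right q x d 1 j, add_comm 1 j] at hrec
    rw [add_right_comm d, loweredHermite_add_self, loweredHermite_add_self,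
      add_comm (d + 1), qInt_add]
    linear_combination q ^ j * hrec
  · rw [loweredHermite_of_lt q x (Nat.lt_succ_self m),
      loweredHermite_of_lt q x (Nat.lt_succ_of_lt (Nat.lt_succ_self m))]
    ring
  · rw [loweredHermite_of_lt q x hj, loweredHermite_of_lt q x (Nat.lt_of_succ_lt hj),
      loweredHermite_of_lt q x (Nat.lt_succ_of_lt (Nat.lt_of_succ_lt hj))]
    ring

/-- The right-hand side of the inverse linearization formula
`H_{m+n} / ([m]_q! [n]_q!) = ∑_j e_j · H_{m-j} / [m-j]_q! · H_{n-j} / [n-j]_q!`, where `e_j` is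
`eulerCoeff q j`. The terms with `j > min m n` vanish; the range is chosen symmetric in `m` and
`n`. -/
def delinSum (q x : ℝ) (m n : ℕ) : ℝ :=
  ∑ j ∈ range (m + n + 1), eulerCoeff q j * loweredHermite q x m j * loweredHermite q x n j

lemma delinSum_comm (q x : ℝ) (m n : ℕ) : delinSum q x m n = delinSum q x n m := by
  simp only [delinSum, add_comm m n, mul_right_comm]

lemma delinSum_zero_right (q x : ℝ) (m : ℕ) : delinSum q x m 0 = normHermite q x m := by
  have hzero : ∀ j ∈ range m, eulerCoeff q (j + 1) * loweredHermite q x m (j + 1)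
      * loweredHermite q x 0 (j + 1) = 0 := fun j _ => by
    rw [loweredHermite_of_lt q x j.succ_pos, mul_zero]
  rw [delinSum, add_zero, sum_range_succ', sum_eq_zero hzero, eulerCoeff_zero,
    loweredHermite_zero, loweredHermite_zero, normHermite_zero, zero_add, one_mul, mul_one]

lemma hasSum_delinSum (q x : ℝ) (m n : ℕ) :
    HasSum (fun j => eulerCoeff q j * loweredHermite q x m j * loweredHermite q x n j)
      (delinSum q x m n) :=
  hasSum_sum_of_ne_finset_zero fun j hj => by
    rw [loweredHermite_of_lt q x (show n < j by rw [mem_range] at hj; omega), mul_zero]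

lemma qInt_mul_delinSum_succ_left (hq : q ≠ -1) (x : ℝ) (m n : ℕ) :
    qInt q (m + 1) * delinSum q x (m + 1) n =
      ∑ j ∈ range (m + n + 1), eulerCoeff q j * q ^ j *
        (x * loweredHermite q x m j * loweredHermite q x n j
          - loweredHermite q x m (j + 1) * loweredHermite q x n j
          - loweredHermite q x m j * loweredHermite q x n (j + 1)) := by
  have hsplit : qInt q (m + 1) * delinSum q x (m + 1) n =
      ∑ j ∈ range (m + n + 1 + 1),
          eulerCoeff q j * qInt q j * loweredHermite q x (m + 1) j * loweredHermite q x n j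
        + ∑ j ∈ range (m + n + 1 + 1), eulerCoeff q j * q ^ j *
          (x * loweredHermite q x m j - loweredHermite q x m (j + 1)) * loweredHermite q x n j := by
    rw [delinSum, mul_sum, ← sum_add_distrib, add_right_comm m 1 n]
    refine sum_congr rfl fun j _ => ?_
    linear_combination eulerCoeff q j * loweredHermite q x n j
      * qInt_mul_loweredHermite_succ hq x m j
  rw [hsplit, sum_range_succ', sum_range_succ _ (m + n + 1), qInt_zero,
    loweredHermite_of_lt q x (show n < m + n + 1 by omega)]
  simp only [mul_zero, zero_mul, add_zero]
  rw [← sum_add_distrib]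
  refine sum_congr rfl fun j _ => ?_
  rw [loweredHermite_add_right, eulerCoeff_succ_mul_qInt hq]
  ring

lemma qInt_mul_delinSum_succ (hq : q ≠ -1) (x : ℝ) (m n : ℕ) :
    qInt q (m + 1) * delinSum q x (m + 1) n = qInt q (n + 1) * delinSum q x m (n + 1) := by
  rw [delinSum_comm q x m, qInt_mul_delinSum_succ_left hq, qInt_mul_delinSum_succ_left hq,
    add_comm n m]
  exact sum_congr rfl fun j _ => by ring

lemma qHermite_add (hq : q ≠ -1) (x : ℝ) (m n : ℕ) :
    qHermite q (m + n) x = qFact q m * qFact q n * delinSum q x m n := by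
  induction n generalizing m with
  | zero => rw [add_zero, delinSum_zero_right, qFact_zero, mul_one, qFact_mul_normHermite hq]
  | succ n ih =>
    rw [← add_assoc, add_right_comm, ih, qFact_succ, qFact_succ]
    linear_combination qFact q m * qFact q n * qInt_mul_delinSum_succ hq x m n

end Delinearization

section Mehler

variable {q x y t : ℝ}

/-- The general term of the shifted Poisson–Mehler series
`∑_m t^m H_{m+s}(x|q) H_m(y|q) / [m]_q!`. -/
def mehlerTerm (q x y t : ℝ) (s m : ℕ) : ℝ := t ^ m * qHermite q (m + s) x * normHermite q y m

/-- The shifted Poisson–Mehler kernel `∑_m t^m H_{m+s}(x|q) H_m(y|q) / [m]_q!`. -/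
def mehlerSum (q x y t : ℝ) (s : ℕ) : ℝ := ∑' m, mehlerTerm q x y t s m

lemma hasSum_mehlerSum {s : ℕ} (hM : Summable (mehlerTerm q x y t s)) :
    HasSum (mehlerTerm q x y t s) (mehlerSum q x y t s) :=
  hM.hasSum

lemma hasSum_of_zero_of_succ {f : ℕ → ℝ} {a : ℝ} (hzero : f 0 = 0)
    (hsucc : HasSum (fun n => f (n + 1)) a) : HasSum f a := by
  simpa only [hzero, zero_add] using hsucc.zero_add

lemma hasSum_qInt_mul_normHermite (hq : q ≠ -1) (hM : ∀ s, Summable (mehlerTerm q x y t s))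
    (s : ℕ) :
    HasSum (fun m => t ^ m * qHermite q (m + s - 1) x * (qInt q m * normHermite q y m))
      (t * (y * mehlerSum q x y t s - t * mehlerSum q x y t (s + 1))) := by
  have hlow : HasSum (fun m => t ^ m * qHermite q (m + s) x * loweredHermite q y m 1)
      (t * mehlerSum q x y t (s + 1)) := by
    refine hasSum_of_zero_of_succ (by rw [loweredHermite_of_lt q y one_pos, mul_zero]) ?_
    refine ((hasSum_mehlerSum (hM (s + 1))).mul_left t).congr_fun fun m => ?_
    rw [mehlerTerm, loweredHermite_add_self, add_right_comm m 1 s, add_assoc m s 1]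
    ring
  refine hasSum_of_zero_of_succ (by rw [qInt_zero, zero_mul, mul_zero]) ?_
  refine ((((hasSum_mehlerSum (hM s)).mul_left y).sub hlow).mul_left t).congr_fun fun m => ?_
  rw [add_right_comm, add_tsub_cancel_right, qInt_mul_normHermite_succ hq, mehlerTerm]
  ring

lemma one_sub_mul_mehlerSum_succ (hq : q ≠ -1) (hM : ∀ s, Summable (mehlerTerm q x y t s))
    (s : ℕ) :
    (1 - t ^ 2 * q ^ s) * mehlerSum q x y t (s + 1)
      = (x - t * y * q ^ s) * mehlerSum q x y t s - qInt q s * mehlerSum q x y t (s - 1) := by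
  have hprev : HasSum (fun m => t ^ m * qHermite q (m + s - 1) x * (qInt q s * normHermite q y m))
      (qInt q s * mehlerSum q x y t (s - 1)) := by
    cases s with
    | zero => simpa only [qInt_zero, zero_mul, mul_zero] using hasSum_zero
    | succ s =>
      refine ((hasSum_mehlerSum (hM s)).mul_left (qInt q (s + 1))).congr_fun fun m => ?_
      rw [mehlerTerm, ← add_assoc, add_tsub_cancel_right]
      ring
  have hrec := (((hasSum_mehlerSum (hM s)).mul_left x).sub hprev).sub
    ((hasSum_qInt_mul_normHermite hq hM s).mul_left (q ^ s))
  have hsum := (hasSum_mehlerSum (hM (s + 1))).unique <| hrec.congr_fun fun m => by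
    rw [mehlerTerm, mehlerTerm, ← add_assoc, qHermite_succ, add_comm m s, qInt_add]
    ring
  linear_combination hsum

lemma ASC_succ (q y t x : ℝ) (s : ℕ) :
    ASC q y t (s + 1) x = (x - t * y * q ^ s) * ASC q y t s x
      - (1 - t ^ 2 * q ^ (s - 1)) * qInt q s * ASC q y t (s - 1) x := by
  cases s <;> simp [ASC, qInt_zero]

lemma mehlerSum_mul_qPoch (hq : q ≠ -1) (hM : ∀ s, Summable (mehlerTerm q x y t s)) (s : ℕ) :
    mehlerSum q x y t s * qPoch (t ^ 2) q s = mehlerSum q x y t 0 * ASC q y t s x := by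
  induction s using Nat.twoStepInduction with
  | zero => simp only [qPoch_zero, ASC]
  | one =>
    have hrec := one_sub_mul_mehlerSum_succ hq hM 0
    rw [qPoch_succ, qPoch_zero, ASC_succ, ASC, qInt_zero]
    linear_combination hrec - mehlerSum q x y t 0 * qInt_zero q
  | more s ih ih' =>
    have hrec := one_sub_mul_mehlerSum_succ hq hM (s + 1)
    rw [add_tsub_cancel_right] at hrec
    rw [qPoch_succ, ASC_succ, add_tsub_cancel_right]
    linear_combination qPoch (t ^ 2) q (s + 1) * hrec + (x - t * y * q ^ (s + 1)) * ih'
      - (1 - t ^ 2 * q ^ s) * qInt q (s + 1) * ih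
      - qInt q (s + 1) * mehlerSum q x y t s * qPoch_succ (t ^ 2) q s

lemma mehlerSum_zero_q_mul (hq : q ≠ -1) (hM : ∀ s, Summable (mehlerTerm q x y t s)) :
    mehlerSum q x y (q * t) 0 = mehlerSum q x y t 0
      - (1 - q) * (t * (y * mehlerSum q x y t 1 - t * mehlerSum q x y t 2)) := by
  refine (((hasSum_mehlerSum (hM 0)).sub
    ((hasSum_qInt_mul_normHermite hq hM 1).mul_left (1 - q))).congr_fun fun m => ?_).tsum_eq
  rw [mehlerTerm, mehlerTerm, add_zero, add_tsub_cancel_right, mul_pow]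
  linear_combination (t ^ m * qHermite q m x * normHermite q y m) * one_sub_mul_qInt q m

/-- The q-difference equation in `t` that makes the Poisson–Mehler kernel an infinite product. -/
lemma mehlerSum_zero_mul_Wk_zero (hq : q ≠ -1) (hM : ∀ s, Summable (mehlerTerm q x y t s)) :
    mehlerSum q x y t 0 * Wk q x y t 0
      = (1 - t ^ 2) * (1 - t ^ 2 * q) * mehlerSum q x y (q * t) 0 := by
  have hone := one_sub_mul_mehlerSum_succ hq hM 0
  have htwo := one_sub_mul_mehlerSum_succ hq hM 1
  simp only [zero_add, pow_zero, mul_one, qInt_zero, zero_mul, sub_zero] at hone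
  simp only [one_add_one_eq_two, pow_one, qInt_one, one_mul, tsub_self] at htwo
  rw [mehlerSum_zero_q_mul hq hM, Wk]
  linear_combination (1 - q) * t * ((1 - t ^ 2 * q) * y - t * (x - t * y * q)) * hone
    - (1 - q) * t ^ 2 * (1 - t ^ 2) * htwo

lemma abs_mehlerTerm_mul_le {r : ℝ} (hr : |r| ≤ 1) (q x y t : ℝ) (s m : ℕ) :
    |mehlerTerm q x y (r * t) s m| ≤ |mehlerTerm q x y t s m| := by
  simp only [mehlerTerm, abs_mul, abs_pow]
  gcongr
  exact mul_le_of_le_one_left (abs_nonneg t) hr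

lemma mehlerSum_zero_mul_prod_Wk (hq : |q| < 1) (hM : ∀ s, Summable (mehlerTerm q x y t s))
    (N : ℕ) :
    mehlerSum q x y t 0 * ∏ k ∈ range N, Wk q x y t k
      = qPoch (t ^ 2) q (2 * N) * mehlerSum q x y (q ^ N * t) 0 := by
  induction N with
  | zero => simp [qPoch_zero]
  | succ N ih =>
    have hpow : |q ^ N| ≤ 1 := by
      rw [abs_pow]
      exact pow_le_one₀ (abs_nonneg q) hq.le
    have hstep := mehlerSum_zero_mul_Wk_zero (t := q ^ N * t) (ne_neg_one_of_abs_lt_one hq)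
      fun s => (hM s).abs.of_norm_bounded (abs_mehlerTerm_mul_le hpow q x y t s)
    rw [← Wk_eq_Wk_zero] at hstep
    rw [prod_range_succ, ← mul_assoc, ih, mul_add_one, qPoch_succ, qPoch_succ, pow_succ' q N,
      mul_assoc q, pow_succ q (2 * N), pow_mul']
    linear_combination qPoch (t ^ 2) q (2 * N) * hstep

lemma tendsto_mehlerSum_pow_mul (hq : |q| < 1) (hM : Summable (mehlerTerm q x y t 0)) :
    Tendsto (fun N : ℕ => mehlerSum q x y (q ^ N * t) 0) atTop (𝓝 1) := by
  have hlim : Tendsto (fun N : ℕ => q ^ N * t) atTop (𝓝 0) := by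
    simpa only [zero_mul] using (tendsto_pow_atTop_nhds_zero_of_abs_lt_one hq).mul_const t
  have hzero : mehlerSum q x y 0 0 = 1 := by
    rw [mehlerSum, tsum_eq_single 0 fun m hm => by simp [mehlerTerm, hm]]
    simp [mehlerTerm, qHermite, normHermite_zero]
  rw [← hzero]
  refine tendsto_tsum_of_dominated_convergence hM.abs
    (fun m => ((hlim.pow m).mul_const _).mul_const _) (Eventually.of_forall fun N m => ?_)
  refine abs_mehlerTerm_mul_le ?_ q x y t 0 m
  rw [abs_pow]
  exact pow_le_one₀ (abs_nonneg q) hq.le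

/-- The Poisson–Mehler formula. -/
lemma mehlerSum_zero_mul_tprod_Wk (hq : |q| < 1) (hM : ∀ s, Summable (mehlerTerm q x y t s)) :
    mehlerSum q x y t 0 * ∏' k, Wk q x y t k = qPochInf (t ^ 2) q := by
  have hleft := (multipliable_Wk hq x y t).tendsto_prod_tprod_nat.const_mul (mehlerSum q x y t 0)
  have hright := ((tendsto_qPoch_qPochInf hq (t ^ 2)).comp
    (tendsto_id.const_mul_atTop' two_pos)).mul (tendsto_mehlerSum_pow_mul hq (hM 0))
  rw [mul_one] at hright
  exact tendsto_nhds_unique hleft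
    (hright.congr fun N => (mehlerSum_zero_mul_prod_Wk hq hM N).symm)

lemma abs_sq_lt_one (ht : |t| < 1) : |t ^ 2| < 1 := by
  rw [abs_pow]
  exact pow_lt_one₀ (abs_nonneg t) ht two_ne_zero

lemma tprod_Wk_ne_zero (hq : |q| < 1) (ht : |t| < 1) (hM : ∀ s, Summable (mehlerTerm q x y t s)) :
    ∏' k, Wk q x y t k ≠ 0 := fun h =>
  qPochInf_ne_zero (abs_sq_lt_one ht) hq (by rw [← mehlerSum_zero_mul_tprod_Wk hq hM, h, mul_zero])

lemma mehlerSum_eq (hq : |q| < 1) (ht : |t| < 1) (hM : ∀ s, Summable (mehlerTerm q x y t s))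
    (s : ℕ) :
    mehlerSum q x y t s
      = qPochInf (t ^ 2) q / (∏' k, Wk q x y t k) * (ASC q y t s x / qPoch (t ^ 2) q s) := by
  rw [← mehlerSum_zero_mul_tprod_Wk hq hM, mul_div_cancel_right₀ _ (tprod_Wk_ne_zero hq ht hM),
    ← mul_div_assoc, ← mehlerSum_mul_qPoch (ne_neg_one_of_abs_lt_one hq) hM,
    mul_div_cancel_right₀ _ (qPoch_ne_zero (abs_sq_lt_one ht) hq.le s)]

end Mehler

section Growth

variable {q x y t K : ℝ}

lemma isBigO_top_of_isBigO_atTop {E F : Type*} [NormedAddCommGroup E] [NormedAddCommGroup F]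
    {f : ℕ → E} {g : ℕ → F} (hfg : f =O[atTop] g) (hg : ∀ n, g n ≠ 0) : f =O[⊤] g :=
  isBigO_top.mpr ((isBigO_nat_atTop_iff fun n h => absurd h (hg n)).mp hfg)

lemma isBigO_pow_of_eventually_norm_le {E : Type*} [NormedAddCommGroup E] {f : ℕ → E}
    (hK : 0 < K) (hf : ∀ᶠ n in atTop, ‖f (n + 1)‖ ≤ K * ‖f n‖) : f =O[⊤] fun n => K ^ n := by
  obtain ⟨N, hN⟩ := eventually_atTop.mp hf
  have hgeom : ∀ n ≥ N, ‖f n‖ ≤ ‖f N‖ / K ^ N * K ^ n := fun n hn => by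
    induction n, hn using Nat.le_induction with
    | base => rw [div_mul_cancel₀ _ (pow_pos hK N).ne']
    | succ n hn ih => calc
        ‖f (n + 1)‖ ≤ K * ‖f n‖ := hN n hn
        _ ≤ K * (‖f N‖ / K ^ N * K ^ n) := by gcongr
        _ = ‖f N‖ / K ^ N * K ^ (n + 1) := by ring
  refine isBigO_top_of_isBigO_atTop (IsBigO.of_bound (‖f N‖ / K ^ N) ?_)
    fun n => (pow_pos hK n).ne'
  filter_upwards [eventually_ge_atTop N] with n hn
  rw [Real.norm_of_nonneg (pow_nonneg hK.le n)]
  exact hgeom n hn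

/-- With `δ = K - 1`, the recurrence makes `δ‖f n‖ + ‖f (n + 1) - z * f n‖` grow at most by the
factor `1 + δ` as soon as `‖ε n‖ ≤ δ ^ 2`. -/
lemma isBigO_pow_of_perturbed_recurrence {𝕜 : Type*} [NormedField 𝕜] {f ε : ℕ → 𝕜} {z w : 𝕜}
    (hz : ‖z‖ ≤ 1) (hw : ‖w‖ ≤ 1) (hε : Tendsto ε atTop (𝓝 0))
    (hf : ∀ n, f (n + 2) = (z + w) * f (n + 1) - (z * w - ε n) * f n) (hK : 1 < K) :
    f =O[⊤] fun n => K ^ n := by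
  set δ := K - 1 with hδ
  have hδ0 : 0 < δ := sub_pos.mpr hK
  set d : ℕ → 𝕜 := fun n => f (n + 1) - z * f n with hd
  set u : ℕ → ℝ := fun n => δ * ‖f n‖ + ‖d n‖ with hu
  have hu0 (n : ℕ) : 0 ≤ u n := by positivity
  have hsmall : ∀ᶠ n in atTop, ‖ε n‖ ≤ δ ^ 2 :=
    hε.norm.eventually_le_const (by rw [norm_zero]; positivity)
  have hratio : ∀ᶠ n in atTop, ‖u (n + 1)‖ ≤ K * ‖u n‖ := by
    filter_upwards [hsmall] with n hn
    have hf1 : ‖f (n + 1)‖ ≤ ‖f n‖ + ‖d n‖ := calc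
      ‖f (n + 1)‖ = ‖z * f n + d n‖ := by rw [hd, add_sub_cancel]
      _ ≤ ‖z‖ * ‖f n‖ + ‖d n‖ := (norm_add_le _ _).trans_eq (by rw [norm_mul])
      _ ≤ ‖f n‖ + ‖d n‖ := by gcongr; exact mul_le_of_le_one_left (norm_nonneg _) hz
    have hd1 : ‖d (n + 1)‖ ≤ ‖d n‖ + δ ^ 2 * ‖f n‖ := calc
      ‖d (n + 1)‖ = ‖w * d n + ε n * f n‖ := by
        congr 1
        linear_combination hf n
      _ ≤ ‖w‖ * ‖d n‖ + ‖ε n‖ * ‖f n‖ := (norm_add_le _ _).trans_eq (by rw [norm_mul, norm_mul])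
      _ ≤ ‖d n‖ + δ ^ 2 * ‖f n‖ := by
        gcongr
        exact mul_le_of_le_one_left (norm_nonneg _) hw
    rw [Real.norm_of_nonneg (hu0 _), Real.norm_of_nonneg (hu0 _)]
    calc u (n + 1) ≤ δ * (‖f n‖ + ‖d n‖) + (‖d n‖ + δ ^ 2 * ‖f n‖) :=
          add_le_add (mul_le_mul_of_nonneg_left hf1 hδ0.le) hd1
      _ = K * u n := by rw [hu, hδ]; ring
  refine IsBigO.trans (isBigO_top.mpr ⟨δ⁻¹, fun n => ?_⟩)
    (isBigO_pow_of_eventually_norm_le (one_pos.trans hK) hratio)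
  rw [Real.norm_of_nonneg (hu0 n), le_inv_mul_iff₀ hδ0]
  exact le_add_of_nonneg_right (norm_nonneg _)

lemma exists_norm_eq_one_re_eq {c : ℝ} (hc : |c| ≤ 1) : ∃ z : ℂ, ‖z‖ = 1 ∧ z.re = c :=
  ⟨Complex.exp (Real.arccos c * Complex.I), Complex.norm_exp_ofReal_mul_I _, by
    rw [Complex.exp_ofReal_mul_I_re, Real.cos_arccos (abs_le.mp hc).1 (abs_le.mp hc).2]⟩

lemma one_sub_pos_of_abs_lt_one (hq : |q| < 1) : 0 < 1 - q := sub_pos.mpr (abs_lt.mp hq).2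

lemma isBigO_qHermite (hq : |q| < 1) (hx : x ∈ Sq q) (hK : 1 < K) :
    (fun n => qHermite q n x) =O[⊤] fun n => (K / √(1 - q)) ^ n := by
  set σ := √(1 - q)
  have hσ0 : 0 < σ := Real.sqrt_pos.mpr (one_sub_pos_of_abs_lt_one hq)
  have hσ2 : σ ^ 2 = 1 - q := Real.sq_sqrt (one_sub_pos_of_abs_lt_one hq).le
  have hc : |σ * x / 2| ≤ 1 := by
    rw [abs_div, abs_mul, abs_of_pos hσ0, abs_two, div_le_one two_pos, ← le_div_iff₀' hσ0]
    exact abs_le.mpr hx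
  obtain ⟨z, hz, hzre⟩ := exists_norm_eq_one_re_eq hc
  have hrec (n : ℕ) : ((σ ^ (n + 2) * qHermite q (n + 2) x : ℝ) : ℂ)
      = (z + conj z) * (σ ^ (n + 1) * qHermite q (n + 1) x : ℝ)
        - (z * conj z - (q ^ (n + 1) : ℝ)) * (σ ^ n * qHermite q n x : ℝ) := by
    rw [Complex.add_conj, Complex.mul_conj, Complex.normSq_eq_norm_sq, hz, hzre]
    norm_cast
    rw [qHermite]
    linear_combination -(σ ^ n * qHermite q n x) * (one_sub_mul_qInt q (n + 1)
      + qInt q (n + 1) * hσ2)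
  have hε : Tendsto (fun n : ℕ => ((q ^ (n + 1) : ℝ) : ℂ)) atTop (𝓝 0) := by
    have := (tendsto_add_atTop_iff_nat 1).mpr (tendsto_pow_atTop_nhds_zero_of_abs_lt_one hq)
    exact_mod_cast (Complex.continuous_ofReal.tendsto 0).comp this
  have hbigO := Complex.isBigO_ofReal_left.mp (isBigO_pow_of_perturbed_recurrence
    (f := fun n => ((σ ^ n * qHermite q n x : ℝ) : ℂ)) hz.le
    ((Complex.norm_conj z).trans hz).le hε hrec hK)
  refine ((isBigO_refl (fun n : ℕ => (σ ^ n)⁻¹) ⊤).mul hbigO).congr (fun n => ?_) fun n => ?_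
  · rw [inv_mul_cancel_left₀ (pow_pos hσ0 n).ne']
  · rw [div_pow, div_eq_inv_mul]

lemma isBigO_inv_qFact (hq : |q| < 1) :
    (fun n => (qFact q n)⁻¹) =O[⊤] fun n => (1 - q) ^ n := by
  have hbdd : (fun n => (qPoch q q n)⁻¹) =O[⊤] fun _ => (1 : ℝ) :=
    isBigO_top_of_isBigO_atTop
      (((tendsto_qPoch_qPochInf hq q).inv₀ (qPochInf_ne_zero hq hq)).isBigO_one ℝ)
      fun _ => one_ne_zero
  refine (hbdd.mul (isBigO_refl (fun n : ℕ => (1 - q) ^ n) ⊤)).congr (fun n => ?_) fun n => ?_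
  · rw [qPoch_self, mul_inv_rev, inv_mul_cancel_right₀
      (pow_pos (one_sub_pos_of_abs_lt_one hq) n).ne']
  · rw [one_mul]

lemma isBigO_eulerCoeff (hq : |q| < 1) : eulerCoeff q =O[⊤] fun n => (1 - q) ^ n :=
  (isBigO_of_le ⊤ (abs_eulerCoeff_le hq.le)).trans (isBigO_inv_qFact hq)

lemma div_sqrt_one_sub_mul_self_mul_one_sub (hq : |q| < 1) (K : ℝ) :
    K / √(1 - q) * (K / √(1 - q)) * (1 - q) = K ^ 2 := by
  rw [div_mul_div_comm, Real.mul_self_sqrt (one_sub_pos_of_abs_lt_one hq).le,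
    div_mul_cancel₀ _ (one_sub_pos_of_abs_lt_one hq).ne', sq]

lemma isBigO_mehlerTerm (hq : |q| < 1) (hx : x ∈ Sq q) (hy : y ∈ Sq q) (hK : 1 < K) (t : ℝ) :
    (fun p : ℕ × ℕ => mehlerTerm q x y t p.1 p.2) =O[⊤]
      fun p => (K / √(1 - q)) ^ p.1 * (t * K ^ 2) ^ p.2 := by
  have hH := (isBigO_qHermite hq hx hK).comp_tendsto
    (l' := ⊤) (k := fun p : ℕ × ℕ => p.2 + p.1) tendsto_top
  have hN := ((isBigO_qHermite hq hy hK).mul (isBigO_inv_qFact hq)).comp_tendsto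
    (l' := ⊤) (k := fun p : ℕ × ℕ => p.2) tendsto_top
  refine (((isBigO_refl (fun p : ℕ × ℕ => t ^ p.2) ⊤).mul hH).mul hN).congr_right fun p => ?_
  simp only [Function.comp_apply, ← div_sqrt_one_sub_mul_self_mul_one_sub hq K, mul_pow, pow_add]
  ring

lemma eventually_norm_mul_sq_lt_one {r : ℝ} (hr : |r| < 1) :
    ∀ᶠ K : ℝ in 𝓝[>] 1, ‖r * K ^ 2‖ < 1 := by
  have hcont : Continuous fun K : ℝ => ‖r * K ^ 2‖ := by fun_prop
  exact (hcont.continuousAt.mono_left nhdsWithin_le_nhds).eventually_lt_const (by simpa using hr)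

lemma summable_mehlerTerm (hq : |q| < 1) (hx : x ∈ Sq q) (hy : y ∈ Sq q) (ht : |t| < 1) (s : ℕ) :
    Summable (mehlerTerm q x y t s) := by
  obtain ⟨K, hlt, hK⟩ := ((eventually_norm_mul_sq_lt_one ht).and self_mem_nhdsWithin).exists
  have hbigO := (isBigO_mehlerTerm hq hx hy hK t).comp_tendsto
    (l' := ⊤) (k := fun m : ℕ => (s, m)) tendsto_top
  exact summable_of_isBigO ((summable_geometric_of_norm_lt_one hlt).mul_left ((K / √(1 - q)) ^ s))
    (hbigO.mono le_top)

end Growth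

section Expansion

variable {q a r₁ r₂ x₁ x₂ x₃ : ℝ}

/-- The general term of the fourfold series obtained from `tripleTerm` by delinearizing the factor
`H_{m+n}(x₃|q)`, indexed by `((k, j), (m, n))` with `j` the delinearization index and `m`, `n`
already lowered by `j`. -/
def quadTerm (q a r₁ r₂ x₁ x₂ x₃ : ℝ) (p : (ℕ × ℕ) × ℕ × ℕ) : ℝ :=
  a ^ p.1.1 / qFact q p.1.1 * (eulerCoeff q p.1.2 * (r₁ * r₂) ^ p.1.2)
    * (mehlerTerm q x₁ x₃ r₁ (p.1.1 + p.1.2) p.2.1 * mehlerTerm q x₂ x₃ r₂ (p.1.1 + p.1.2) p.2.2)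

lemma isBigO_quadTerm {K : ℝ} (hq : |q| < 1) (hx₁ : x₁ ∈ Sq q) (hx₂ : x₂ ∈ Sq q) (hx₃ : x₃ ∈ Sq q)
    (hK : 1 < K) (a r₁ r₂ : ℝ) :
    quadTerm q a r₁ r₂ x₁ x₂ x₃ =O[⊤] fun p => (a * K ^ 2) ^ p.1.1 * (r₁ * r₂ * K ^ 2) ^ p.1.2
      * ((r₁ * K ^ 2) ^ p.2.1 * (r₂ * K ^ 2) ^ p.2.2) := by
  have hk := (isBigO_inv_qFact hq).comp_tendsto
    (l' := ⊤) (k := fun p : (ℕ × ℕ) × ℕ × ℕ => p.1.1) tendsto_top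
  have hj := (isBigO_eulerCoeff hq).comp_tendsto
    (l' := ⊤) (k := fun p : (ℕ × ℕ) × ℕ × ℕ => p.1.2) tendsto_top
  have hm := (isBigO_mehlerTerm hq hx₁ hx₃ hK r₁).comp_tendsto
    (l' := ⊤) (k := fun p : (ℕ × ℕ) × ℕ × ℕ => (p.1.1 + p.1.2, p.2.1)) tendsto_top
  have hn := (isBigO_mehlerTerm hq hx₂ hx₃ hK r₂).comp_tendsto
    (l' := ⊤) (k := fun p : (ℕ × ℕ) × ℕ × ℕ => (p.1.1 + p.1.2, p.2.2)) tendsto_top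
  refine ((((isBigO_refl (fun p => a ^ p.1.1) ⊤).mul hk).mul
    (hj.mul (isBigO_refl (fun p => (r₁ * r₂) ^ p.1.2) ⊤))).mul (hm.mul hn)).congr_right fun p => ?_
  have hratio (i : ℕ) : (K ^ 2) ^ i = (K / √(1 - q)) ^ i * (K / √(1 - q)) ^ i * (1 - q) ^ i := by
    rw [← div_sqrt_one_sub_mul_self_mul_one_sub hq K, mul_pow, mul_pow]
  simp only [Function.comp_apply, mul_pow a, mul_pow (r₁ * r₂), hratio, pow_add]
  ring

lemma summable_quadTerm (hq : |q| < 1) (ha : |a| < 1) (hr₁ : |r₁| < 1) (hr₂ : |r₂| < 1)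
    (hx₁ : x₁ ∈ Sq q) (hx₂ : x₂ ∈ Sq q) (hx₃ : x₃ ∈ Sq q) :
    Summable (quadTerm q a r₁ r₂ x₁ x₂ x₃) := by
  have hr : |r₁ * r₂| < 1 := by
    rw [abs_mul]
    exact mul_lt_one_of_nonneg_of_lt_one_left (abs_nonneg r₁) hr₁ hr₂.le
  obtain ⟨K, ⟨⟨⟨⟨hKa, hKr⟩, hK₁⟩, hK₂⟩, hK⟩⟩ := ((((eventually_norm_mul_sq_lt_one ha).and
    (eventually_norm_mul_sq_lt_one hr)).and (eventually_norm_mul_sq_lt_one hr₁)).and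
    (eventually_norm_mul_sq_lt_one hr₂)).and self_mem_nhdsWithin |>.exists
  have hgeom := ((summable_norm_geometric_of_norm_lt_one hKa).mul_norm
    (summable_norm_geometric_of_norm_lt_one hKr)).mul_norm
    ((summable_norm_geometric_of_norm_lt_one hK₁).mul_norm
      (summable_norm_geometric_of_norm_lt_one hK₂))
  exact summable_of_isBigO hgeom.of_norm
    ((isBigO_quadTerm hq hx₁ hx₂ hx₃ hK a r₁ r₂).mono le_top)

lemma hasSum_quadTerm_fiber (hM₁ : ∀ s, Summable (mehlerTerm q x₁ x₃ r₁ s))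
    (hM₂ : ∀ s, Summable (mehlerTerm q x₂ x₃ r₂ s)) (a : ℝ) (p : ℕ × ℕ) :
    HasSum (fun mn => quadTerm q a r₁ r₂ x₁ x₂ x₃ (p, mn))
      (a ^ p.1 / qFact q p.1 * (eulerCoeff q p.2 * (r₁ * r₂) ^ p.2)
        * (mehlerSum q x₁ x₃ r₁ (p.1 + p.2) * mehlerSum q x₂ x₃ r₂ (p.1 + p.2))) :=
  ((hasSum_mehlerSum (hM₁ _)).mul (hasSum_mehlerSum (hM₂ _))
    (summable_mul_of_summable_norm (hM₁ _).norm (hM₂ _).norm)).mul_left _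

lemma hasSum_sum_antidiagonal {M : Type*} [AddCommMonoid M] [TopologicalSpace M] [ContinuousAdd M]
    [RegularSpace M] {f : ℕ × ℕ → M} {S : M} (hf : HasSum f S) :
    HasSum (fun s => ∑ p ∈ antidiagonal s, f p) S :=
  (HasAntidiagonal.sigmaAntidiagonalEquivProd.hasSum_iff.mpr hf).sigma fun s => by
    rw [← sum_coe_sort]
    exact hasSum_fintype _

lemma hasSum_mehlerSum_mul_mehlerSum (hq : q ≠ -1) (hM₁ : ∀ s, Summable (mehlerTerm q x₁ x₃ r₁ s))
    (hM₂ : ∀ s, Summable (mehlerTerm q x₂ x₃ r₂ s)) {S : ℝ}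
    (hS : HasSum (quadTerm q a r₁ r₂ x₁ x₂ x₃) S) :
    HasSum (fun s => (∏ i ∈ range s, (a - r₁ * r₂ * q ^ i)) / qFact q s
      * (mehlerSum q x₁ x₃ r₁ s * mehlerSum q x₂ x₃ r₂ s)) S := by
  refine (hasSum_sum_antidiagonal
    (hS.prod_fiberwise (hasSum_quadTerm_fiber hM₁ hM₂ a))).congr_fun fun s => ?_
  rw [← qFact_mul_sum_antidiagonal_eulerCoeff hq, mul_div_cancel_left₀ _ (qFact_ne_zero hq s),
    sum_mul]
  exact sum_congr rfl fun p hp => by rw [mem_antidiagonal.mp hp]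

lemma hasSum_shift_iff {α M : Type*} [AddCommMonoid M] [TopologicalSpace M]
    {f : (α × ℕ × ℕ) × ℕ → M} {S : M} (hm : ∀ k m n j, m < j → f ((k, m, n), j) = 0)
    (hn : ∀ k m n j, n < j → f ((k, m, n), j) = 0) :
    HasSum (fun p : (α × ℕ) × ℕ × ℕ => f ((p.1.1, p.2.1 + p.1.2, p.2.2 + p.1.2), p.1.2)) S
      ↔ HasSum f S := by
  have hinj : Function.Injective fun p : (α × ℕ) × ℕ × ℕ =>
      ((p.1.1, p.2.1 + p.1.2, p.2.2 + p.1.2), p.1.2) := by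
    rintro ⟨⟨k, j⟩, m, n⟩ ⟨⟨k', j'⟩, m', n'⟩ h
    simp only [Prod.mk.injEq] at h ⊢
    obtain ⟨⟨hk, hm, hn⟩, rfl⟩ := h
    exact ⟨⟨hk, rfl⟩, Nat.add_right_cancel hm, Nat.add_right_cancel hn⟩
  refine hinj.hasSum_iff ?_
  rintro ⟨⟨k, m, n⟩, j⟩ hrange
  by_contra hne
  have hjm : j ≤ m := not_lt.mp fun h => hne (hm k m n j h)
  have hjn : j ≤ n := not_lt.mp fun h => hne (hn k m n j h)
  exact hrange ⟨((k, j), (m - j, n - j)), by simp only [Nat.sub_add_cancel, hjm, hjn]⟩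

lemma tripleTerm_eq_mul_delinSum (hq : q ≠ -1) (a r₁ r₂ x₁ x₂ x₃ : ℝ) (k m n : ℕ) :
    tripleTerm q a r₁ r₂ x₁ x₂ x₃ (k, m, n) = a ^ k * r₁ ^ m * r₂ ^ n / qFact q k
      * qHermite q (k + m) x₁ * qHermite q (k + n) x₂ * delinSum q x₃ m n := by
  have hk := qFact_ne_zero hq k
  have hm := qFact_ne_zero hq m
  have hn := qFact_ne_zero hq n
  simp only [tripleTerm, qHermite_add hq x₃]
  field_simp

lemma hasSum_tripleTerm (hq : q ≠ -1) {S : ℝ} (hS : HasSum (quadTerm q a r₁ r₂ x₁ x₂ x₃) S) :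
    HasSum (tripleTerm q a r₁ r₂ x₁ x₂ x₃) S := by
  set f : (ℕ × ℕ × ℕ) × ℕ → ℝ := fun p =>
    a ^ p.1.1 * r₁ ^ p.1.2.1 * r₂ ^ p.1.2.2 / qFact q p.1.1 * qHermite q (p.1.1 + p.1.2.1) x₁
      * qHermite q (p.1.1 + p.1.2.2) x₂ * (eulerCoeff q p.2 * loweredHermite q x₃ p.1.2.1 p.2
        * loweredHermite q x₃ p.1.2.2 p.2) with hf
  have hfS : HasSum f S := by
    refine (hasSum_shift_iff (fun k m n j h => ?_) fun k m n j h => ?_).mp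
      (hS.congr_fun fun p => ?_)
    · simp only [hf, loweredHermite_of_lt q x₃ h, mul_zero, zero_mul]
    · simp only [hf, loweredHermite_of_lt q x₃ h, mul_zero]
    · simp only [hf, quadTerm, mehlerTerm, loweredHermite_add_self, add_left_comm p.1.1]
      ring
  refine hfS.prod_fiberwise fun ⟨k, m, n⟩ => ?_
  rw [tripleTerm_eq_mul_delinSum hq]
  exact (hasSum_delinSum q x₃ m n).mul_left _

lemma tprod_Wk_mul_Wk (hq : |q| < 1) (x₁ x₂ x₃ r₁ r₂ : ℝ) :
    ∏' k, Wk q x₁ x₃ r₁ k * Wk q x₃ x₂ r₂ k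
      = (∏' k, Wk q x₁ x₃ r₁ k) * ∏' k, Wk q x₂ x₃ r₂ k := by
  simp only [Wk_comm q x₃ x₂]
  exact (multipliable_Wk hq x₁ x₃ r₁).tprod_mul (multipliable_Wk hq x₂ x₃ r₂)

lemma prod_mul_mehlerSum_mul_mehlerSum (hq : |q| < 1) (ha : a ≠ 0) (hr₁ : |r₁| < 1)
    (hr₂ : |r₂| < 1) (hM₁ : ∀ s, Summable (mehlerTerm q x₁ x₃ r₁ s))
    (hM₂ : ∀ s, Summable (mehlerTerm q x₂ x₃ r₂ s)) (s : ℕ) :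
    (∏ i ∈ range s, (a - r₁ * r₂ * q ^ i)) / qFact q s
        * (mehlerSum q x₁ x₃ r₁ s * mehlerSum q x₂ x₃ r₂ s)
      = qPochInf (r₁ ^ 2) q * qPochInf (r₂ ^ 2) q / (∏' k, Wk q x₁ x₃ r₁ k * Wk q x₃ x₂ r₂ k)
        * (a ^ s * qPoch (r₁ * r₂ / a) q s
          / (qFact q s * qPoch (r₁ ^ 2) q s * qPoch (r₂ ^ 2) q s)
          * ASC q x₃ r₁ s x₁ * ASC q x₃ r₂ s x₂) := by
  rw [mehlerSum_eq hq hr₁ hM₁, mehlerSum_eq hq hr₂ hM₂, ← pow_mul_qPoch_div ha,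
    tprod_Wk_mul_Wk hq]
  simp only [div_eq_mul_inv, mul_inv]
  ring

theorem KS_expansion_two_general (hq : |q| < 1) {ρ₁₂ ρ₁₃ ρ₂₃ : ℝ} (h12 : ρ₁₂ ≠ 0)
    (h12' : |ρ₁₂| < 1) (h13 : |ρ₁₃| < 1) (h23 : |ρ₂₃| < 1) (hx₁ : x₁ ∈ Sq q) (hx₂ : x₂ ∈ Sq q)
    (hx₃ : x₃ ∈ Sq q) :
    (Summable fun s : ℕ => ρ₁₂ ^ s * qPoch (ρ₁₃ * ρ₂₃ / ρ₁₂) q s /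
        (qFact q s * qPoch (ρ₁₃ ^ 2) q s * qPoch (ρ₂₃ ^ 2) q s) *
      ASC q x₃ ρ₁₃ s x₁ * ASC q x₃ ρ₂₃ s x₂) ∧
    HasSum (tripleTerm q ρ₁₂ ρ₁₃ ρ₂₃ x₁ x₂ x₃)
      (qPochInf (ρ₁₃ ^ 2) q * qPochInf (ρ₂₃ ^ 2) q /
          (∏' k : ℕ, Wk q x₁ x₃ ρ₁₃ k * Wk q x₃ x₂ ρ₂₃ k) *
        ∑' s : ℕ, ρ₁₂ ^ s * qPoch (ρ₁₃ * ρ₂₃ / ρ₁₂) q s /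
            (qFact q s * qPoch (ρ₁₃ ^ 2) q s * qPoch (ρ₂₃ ^ 2) q s) *
          ASC q x₃ ρ₁₃ s x₁ * ASC q x₃ ρ₂₃ s x₂) := by
  have hq' := ne_neg_one_of_abs_lt_one hq
  have hM₁ := summable_mehlerTerm hq hx₁ hx₃ h13
  have hM₂ := summable_mehlerTerm hq hx₂ hx₃ h23
  obtain ⟨S, hS⟩ := summable_quadTerm hq h12' h13 h23 hx₁ hx₂ hx₃
  have hexpand := hasSum_mehlerSum_mul_mehlerSum hq' hM₁ hM₂ hS
  simp only [prod_mul_mehlerSum_mul_mehlerSum hq h12 h13 h23 hM₁ hM₂] at hexpand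
  have hconst : qPochInf (ρ₁₃ ^ 2) q * qPochInf (ρ₂₃ ^ 2) q /
      (∏' k : ℕ, Wk q x₁ x₃ ρ₁₃ k * Wk q x₃ x₂ ρ₂₃ k) ≠ 0 := by
    rw [tprod_Wk_mul_Wk hq]
    exact div_ne_zero
      (mul_ne_zero (qPochInf_ne_zero (abs_sq_lt_one h13) hq)
        (qPochInf_ne_zero (abs_sq_lt_one h23) hq))
      (mul_ne_zero (tprod_Wk_ne_zero hq h13 hM₁) (tprod_Wk_ne_zero hq h23 hM₂))
  refine ⟨(summable_mul_left_iff hconst).mp hexpand.summable, ?_⟩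
  rw [← tsum_mul_left, hexpand.tsum_eq]
  exact hasSum_tripleTerm hq' hS

end Expansion

/-- second expansion of the generalized Kibble–Slepian sum `g`,
in Al-Salam–Chihara polynomials. -/
theorem KS_expansion_two (q ρ₁₂ ρ₁₃ ρ₂₃ : ℝ) (hq : |q| < 1)
    (h12 : 0 < |ρ₁₂|) (h12' : |ρ₁₂| < 1) (h13 : 0 < |ρ₁₃|) (h13' : |ρ₁₃| < 1)
    (h23 : 0 < |ρ₂₃|) (h23' : |ρ₂₃| < 1)
    (hconv : ∀ x₁ ∈ Sq q, ∀ x₂ ∈ Sq q, ∀ x₃ ∈ Sq q,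
      Summable (tripleTerm q ρ₁₂ ρ₁₃ ρ₂₃ x₁ x₂ x₃))
    (x₁ x₂ x₃ : ℝ) (hx₁ : x₁ ∈ Sq q) (hx₂ : x₂ ∈ Sq q) (hx₃ : x₃ ∈ Sq q) :
    (∑' p : ℕ × ℕ × ℕ, tripleTerm q ρ₁₂ ρ₁₃ ρ₂₃ x₁ x₂ x₃ p) =
      qPochInf (ρ₁₃ ^ 2) q * qPochInf (ρ₂₃ ^ 2) q /
          (∏' k : ℕ, Wk q x₁ x₃ ρ₁₃ k * Wk q x₃ x₂ ρ₂₃ k) *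
        ∑' s : ℕ, ρ₁₂ ^ s * qPoch (ρ₁₃ * ρ₂₃ / ρ₁₂) q s /
            (qFact q s * qPoch (ρ₁₃ ^ 2) q s * qPoch (ρ₂₃ ^ 2) q s) *
          ASC q x₃ ρ₁₃ s x₁ * ASC q x₃ ρ₂₃ s x₂ :=
  (KS_expansion_two_general hq (abs_pos.mp h12) h12' h13' h23' hx₁ hx₂ hx₃).2.tsum_eq
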